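/- Suppose the mixed Hodge–Riemann relations hold in co-degree 1: for all convex bodies K_2,…,K_n ∈ K_+^∞ and every non-zero φ ∈ Val_{n−1}^∞ with φ * V(·[n−1],K_2) * ⋯ * V(·[n−1],K_n) = 0, one has −conj(φ) * φ * V(·[n−1],K_3) * ⋯ * V(·[n−1],K_n) > 0. Then the Aleksandrov–Fenchel inequality V(K_1,K_2,K_3,…,K_n)² ≥ V(K_1,K_1,K_3,…,K_n) · V(K_2,K_2,K_3,…,K_n) holds for all convex bodies K_1,…,K_n ∈ K_+^∞. -/

import Mathlib

/-!
Fix `L = (K_3, …, K_n)` and write `v_K = V(·[n-1], K)`. Up to a positive factor, the form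
`(φ, ψ) ↦ φ * ψ * v_{K_3} * ⋯ * v_{K_n}` takes the value `V(K, K', L)` at `(v_K, v_{K'})`.
With `a = V(K_1,K_1,L)`, `b = V(K_1,K_2,L)`, `c = V(K_2,K_2,L)`, the real valuation
`φ = c v_{K_1} - b v_{K_2}` is orthogonal to `v_{K_2}`, and the form takes a positive multiple of
`c (ac - b²)` at `(φ, φ)`. The Hodge–Riemann relations make this non-positive, so `ac ≤ b²`
once `c > 0`.

Positivity of `c` comes from the Hodge–Riemann relations too. If `V(M,M,L) = 0`, then `v_M ≠ 0` is
orthogonal to itself, which they forbid. So `V(M,M,L)` never vanishes on `K_+^∞`. It equals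
`vol_n(M) > 0` when every `L_i` is `M`, and since `K_+^∞` is connected and mixed volumes are
continuous in each body, it stays positive when the `L_i` are moved one at a time.
-/

open MeasureTheory Pointwise
noncomputable section

/-- Euclidean space `ℝ^n`. -/
abbrev ESp (n : ℕ) : Type := EuclideanSpace ℝ (Fin n)

/-- Convex bodies (non-empty compact convex sets) in `ℝ^n`. -/
abbrev Body (n : ℕ) : Type := ConvexBody (ESp n)

/-- Complex-valued functionals on convex bodies; valuations live here. -/
abbrev Vl (n : ℕ) : Type := Body n → ℂ

variable {n : ℕ}

/-- The convex body `{x}`. -/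
def ptBody (x : ESp n) : Body n :=
  ⟨{x}, convex_singleton x, isCompact_singleton, Set.singleton_nonempty x⟩

/-- The convex body `-K`. -/
def negBody (K : Body n) : Body n :=
  ⟨-(K : Set (ESp n)), K.convex.neg, K.isCompact.neg, K.nonempty.neg⟩

/-- Finite additivity: `φ(K ∪ L) + φ(K ∩ L) = φ(K) + φ(L)` whenever `K ∪ L` is convex. -/
def IsValuation (φ : Vl n) : Prop :=
  ∀ K L M N : Body n, (M : Set (ESp n)) = (K : Set (ESp n)) ∪ (L : Set (ESp n)) →
    (N : Set (ESp n)) = (K : Set (ESp n)) ∩ (L : Set (ESp n)) →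
    φ M + φ N = φ K + φ L

/-- Translation invariance. -/
def TransInv (φ : Vl n) : Prop := ∀ (K : Body n) (x : ESp n), φ (K + ptBody x) = φ K

/-- `φ` is homogeneous of degree `k`. -/
def IsHomog (k : ℕ) (φ : Vl n) : Prop :=
  ∀ r : ℝ, 0 < r → ∀ K : Body n, φ (r • K) = (r : ℂ) ^ k * φ K

/-- `φ` has parity `s` (`s = 0`: even, `s = 1`: odd). -/
def HasParity (s : ℕ) (φ : Vl n) : Prop :=
  ∀ K : Body n, φ (negBody K) = (-1 : ℂ) ^ s * φ K

/-- The Euler characteristic `χ`. -/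
def chiVal : Vl n := fun _ => 1

/-- The Lebesgue measure `vol_n` as a valuation. -/
def volVal : Vl n := fun K => ((volume (K : Set (ESp n))).toReal : ℂ)

/-- The valuation `vol_n(· + A)`. -/
def volAdd (A : Body n) : Vl n :=
  fun K => ((volume ((K + A : Body n) : Set (ESp n))).toReal : ℂ)

/-- The valuation `vol_{2n}(Δ(·) + A × B)` on `ℝ^n × ℝ^n ≅ ℝ^{2n}`. -/
def volDiagProd (A B : Body n) : Vl n := fun K =>
  ((volume (((fun x => (x, x)) '' (K : Set (ESp n))) +
      (A : Set (ESp n)) ×ˢ (B : Set (ESp n)))).toReal : ℂ)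

/-- Pointwise complex conjugate of a valuation. -/
def conjVal (φ : Vl n) : Vl n := fun K => (starRingEnd ℂ) (φ K)

/-- The closed unit Euclidean ball `D` as a convex body. -/
def ballBody (n : ℕ) : Body n :=
  ⟨Metric.closedBall 0 1, convex_closedBall 0 1, isCompact_closedBall 0 1,
    ⟨0, Metric.mem_closedBall_self zero_le_one⟩⟩

/-- The mixed volume `V(K_1, …, K_n)`, via the inclusion–exclusion (polarization) formula
`n! V(K_1,…,K_n) = ∑_{S ⊆ [n]} (-1)^{n-|S|} vol_n(∑_{i ∈ S} K_i)`. -/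
def mixedVol (K : Fin n → Body n) : ℝ :=
  (n.factorial : ℝ)⁻¹ * ∑ S : Finset (Fin n), (-1 : ℝ) ^ (n - S.card) *
    (volume ((∑ i ∈ S, K i : Body n) : Set (ESp n))).toReal

/-- The family `(K[k], D[n-k])`: `k` copies of `K` and `n-k` copies of the unit ball. -/
def kD (K : Body n) (k : ℕ) : Fin n → Body n := fun i => if (i : ℕ) < k then K else ballBody n

/-- The mixed volume valuation `V(·[n-1], L)`. -/
def mixedVal (L : Body n) : Vl n :=
  fun K => ((mixedVol (fun i => if (i : ℕ) < n - 1 then K else L) : ℝ) : ℂ)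

/-- Iterated product `x^m` w.r.t. a bilinear product `mul` with unit `unit`. -/
def powWith (mul : Vl n →ₗ[ℂ] Vl n →ₗ[ℂ] Vl n) (unit x : Vl n) : ℕ → Vl n
  | 0 => unit
  | m + 1 => mul x (powWith mul unit x m)

open RealInnerProductSpace in
/-- The support function of a convex body. -/
def suppFn (K : Body n) (x : ESp n) : ℝ := sSup ((fun y => ⟪x, y⟫) '' (K : Set (ESp n)))

open RealInnerProductSpace in
/-- The class `K_+^∞` of convex bodies with non-empty interior, smooth boundary and positive
Gauss–Kronecker curvature, characterized via the support function: `h_K` is smooth away from `0`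
and its Hessian at every `x ≠ 0` is positive definite on `x^⊥`. -/
def KPlusInfty (n : ℕ) : Set (Body n) :=
  {K | (interior (K : Set (ESp n))).Nonempty ∧ ContDiffOn ℝ (⊤ : ℕ∞) (suppFn K) {(0 : ESp n)}ᶜ ∧
    ∀ x : ESp n, x ≠ 0 → ∀ v : ESp n, ⟪x, v⟫ = 0 → v ≠ 0 →
      0 < fderiv ℝ (fun y => fderiv ℝ (suppFn K) y v) x v}

/-- The subspace of `k`-homogeneous functionals. -/
def homogSub (n k : ℕ) : Submodule ℂ (Vl n) where
  carrier := {φ | IsHomog k φ}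
  add_mem' := by
    intro φ ψ hφ hψ r hr K
    simp only [Pi.add_apply, hφ r hr K, hψ r hr K]; ring
  zero_mem' := by intro r hr K; simp
  smul_mem' := by
    intro c φ hφ r hr K
    simp only [Pi.smul_apply, hφ r hr K, smul_eq_mul]; ring

/-- The subspace of functionals of parity `s`. -/
def paritySub (n : ℕ) (s : ℕ) : Submodule ℂ (Vl n) where
  carrier := {φ | HasParity s φ}
  add_mem' := by
    intro φ ψ hφ hψ K
    simp only [Pi.add_apply, hφ K, hψ K]; ring
  zero_mem' := by intro K; simp
  smul_mem' := by
    intro c φ hφ K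
    simp only [Pi.smul_apply, hφ K, smul_eq_mul]; ring

end

noncomputable section

/-- The mixed-volume valuation `V(·[n-k], A_1, …, A_k)`. -/
def genMixedVal {n k : ℕ} (A : Fin k → Body n) : Vl n := fun K =>
  ((mixedVol (fun i : Fin n =>
      if (i : ℕ) < n - k then K
      else if h : (i : ℕ) - (n - k) < k then A ⟨(i : ℕ) - (n - k), h⟩ else K) : ℝ) : ℂ)

/-- Iterated Bernig–Fu convolution of a list of valuations (with unit `vol_n`). -/
def convList {n : ℕ} (conv : Vl n →ₗ[ℂ] Vl n →ₗ[ℂ] Vl n) : List (Vl n) → Vl n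
  | [] => volVal
  | x :: xs => conv x (convList conv xs)

/-- The family `(K₁, K₂, L_1, …, L_{n-2})` of `n` convex bodies. -/
def famAF {n : ℕ} (K₁ K₂ : Body n) (L : Fin (n - 2) → Body n) : Fin n → Body n := fun i =>
  if (i : ℕ) = 0 then K₁ else if (i : ℕ) = 1 then K₂
  else if h : (i : ℕ) - 2 < n - 2 then L ⟨(i : ℕ) - 2, h⟩ else K₁

/-- The space `Val^∞` of smooth valuations with the Bernig–Fu convolution and its behavior
on mixed volumes, packaged with their basic properties (Bernig–Fu, Hadwiger). -/
structure BFConvolution (n : ℕ) where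
  /-- the subspace `Val^∞` of smooth valuations -/
  Smooth : Submodule ℂ (Vl n)
  smooth_val : ∀ φ ∈ Smooth, IsValuation φ ∧ TransInv φ ∧ Continuous φ
  kplus_good : ∀ K ∈ KPlusInfty n, volAdd K ∈ Smooth
  /-- the Bernig–Fu convolution -/
  conv : Vl n →ₗ[ℂ] Vl n →ₗ[ℂ] Vl n
  conv_spec : ∀ K ∈ KPlusInfty n, ∀ L ∈ KPlusInfty n,
    conv (volAdd K) (volAdd L) = volAdd (K + L)
  conv_mem : ∀ φ ∈ Smooth, ∀ ψ ∈ Smooth, conv φ ψ ∈ Smooth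
  conv_comm : ∀ φ ∈ Smooth, ∀ ψ ∈ Smooth, conv φ ψ = conv ψ φ
  conv_assoc : ∀ φ ∈ Smooth, ∀ ψ ∈ Smooth, ∀ ρ ∈ Smooth,
    conv (conv φ ψ) ρ = conv φ (conv ψ ρ)
  vol_smooth : volVal ∈ Smooth
  conv_vol : ∀ φ ∈ Smooth, conv volVal φ = φ
  /-- mixed-volume valuations with smooth strictly positively curved bodies are smooth -/
  mixed_smooth : ∀ (k : ℕ), k ≤ n → ∀ A : Fin k → Body n, (∀ i, A i ∈ KPlusInfty n) →
    genMixedVal A ∈ Smooth ∧ IsHomog (n - k) (genMixedVal A)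
  /-- `V(·[n-k],A_1,…,A_k) * V(·[n-l],B_1,…,B_l) = c_{k,l} V(·[n-k-l],A_1,…,A_k,B_1,…,B_l)` -/
  conv_mixed : ∀ k l : ℕ, k + l ≤ n → ∃ c : ℝ, 0 < c ∧
    ∀ (A : Fin k → Body n) (B : Fin l → Body n),
      (∀ i, A i ∈ KPlusInfty n) → (∀ j, B j ∈ KPlusInfty n) →
      conv (genMixedVal A) (genMixedVal B) = (c : ℂ) • genMixedVal (Fin.append A B)
  /-- `0`-homogeneous valuations are multiples of the Euler characteristic; this realizes
  the identification `Val_0^∞ ≅ ℂ` via `χ`. -/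
  grade_zero : ∀ φ : Vl n, IsValuation φ → TransInv φ → Continuous φ → IsHomog 0 φ →
    ∃ c : ℂ, φ = c • chiVal

/-! ### Mixed volumes -/

section MixedVolume

variable {n : ℕ}

-- The left-hand side is the `n`-th forward difference of `x ↦ xⁿ` at `0`.
lemma sum_neg_one_pow_mul_card_pow (R : Type*) [CommRing R] (n : ℕ) :
    ∑ S : Finset (Fin n), (-1 : R) ^ (n - S.card) * (S.card : R) ^ n = n.factorial := by
  have hdiff := congrFun (fwdDiff_iter_eq_factorial (R := R) (n := n)) 0
  rw [fwdDiff_iter_eq_sum_shift] at hdiff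
  rw [← Finset.powerset_univ,
    Finset.sum_powerset_apply_card (fun m => (-1 : R) ^ (n - m) * (m : R) ^ n),
    Finset.card_univ, Fintype.card_fin]
  refine Eq.trans (Finset.sum_congr rfl fun m _ => ?_) hdiff
  simp only [nsmul_eq_mul, zsmul_eq_mul, zero_add, mul_one]
  push_cast
  ring

lemma toReal_volume_nsmul (K : Body n) (m : ℕ) :
    (volume ((m • K : Body n) : Set (ESp n))).toReal
      = (m : ℝ) ^ n * (volume (K : Set (ESp n))).toReal := by
  have hcoe : ((m • K : Body n) : Set (ESp n)) = (m : ℝ) • (K : Set (ESp n)) := by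
    rw [← Nat.cast_smul_eq_nsmul NNReal, ConvexBody.coe_smul']
    rfl
  rw [hcoe, Measure.addHaar_smul, ENNReal.toReal_mul, ENNReal.toReal_ofReal (abs_nonneg _),
    finrank_euclideanSpace_fin, abs_of_nonneg (by positivity)]

lemma mixedVol_const (K : Body n) :
    mixedVol (fun _ : Fin n => K) = (volume (K : Set (ESp n))).toReal := by
  simp only [mixedVol, Finset.sum_const, toReal_volume_nsmul, ← mul_assoc]
  rw [← Finset.sum_mul, sum_neg_one_pow_mul_card_pow, ← mul_assoc,
    inv_mul_cancel₀ (by positivity), one_mul]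

lemma mixedVol_comp_perm (K : Fin n → Body n) (σ : Equiv.Perm (Fin n)) :
    mixedVol (K ∘ σ) = mixedVol K := by
  unfold mixedVol
  congr 1
  refine Fintype.sum_equiv (Equiv.finsetCongr σ) _ _ fun S => ?_
  simp [Equiv.finsetCongr_apply]

lemma genMixedVal_apply_of_full (A : Fin n → Body n) (K : Body n) :
    genMixedVal A K = (mixedVol A : ℂ) := by
  simp [genMixedVal]

lemma genMixedVal_comp_cast {k k' : ℕ} (h : k = k') (A : Fin k' → Body n) :
    genMixedVal (A ∘ Fin.cast h) = genMixedVal A := by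
  subst h
  rfl

lemma genMixedVal_fin_zero (A : Fin 0 → Body n) : genMixedVal A = volVal := by
  funext K
  simp [genMixedVal, volVal, mixedVol_const]

lemma genMixedVal_fin_one (K : Body n) : genMixedVal (fun _ : Fin 1 => K) = mixedVal K := by
  funext X
  have hlast (i : Fin n) : (i : ℕ) - (n - 1) < 1 := by omega
  simp only [genMixedVal, mixedVal, hlast, dite_true]

lemma mixedVal_apply_self (K : Body n) :
    mixedVal K K = ((volume (K : Set (ESp n))).toReal : ℂ) := by
  simp only [mixedVal, ite_self, mixedVol_const]

lemma toReal_volume_pos {K : Body n} (hK : (interior (K : Set (ESp n))).Nonempty) :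
    0 < (volume (K : Set (ESp n))).toReal :=
  ENNReal.toReal_pos (Measure.measure_pos_of_nonempty_interior _ hK).ne'
    K.isCompact.measure_lt_top.ne

lemma mixedVal_ne_zero {K : Body n} (hK : (interior (K : Set (ESp n))).Nonempty) :
    mixedVal K ≠ 0 := by
  intro h
  have hvol := congrFun h K
  rw [mixedVal_apply_self, Pi.zero_apply, Complex.ofReal_eq_zero] at hvol
  exact (toReal_volume_pos hK).ne' hvol

lemma conjVal_mixedVal (K : Body n) : conjVal (mixedVal K) = mixedVal K :=
  funext fun _ => Complex.conj_ofReal _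

lemma ofReal_smul_chiVal_inj {r s : ℝ} :
    (r : ℂ) • (chiVal : Vl n) = (s : ℂ) • chiVal ↔ r = s := by
  refine ⟨fun h => ?_, fun h => by rw [h]⟩
  simpa [chiVal] using congrFun h 0

end MixedVolume

section AleksandrovFenchelFamily

variable {m : ℕ}

lemma famAF_eq_cons (M N : Body (m + 2)) (L : Fin m → Body (m + 2)) :
    famAF M N L = Fin.cons M (Fin.cons N L : Fin (m + 1) → Body (m + 2)) := by
  funext i
  refine Fin.cases rfl (fun i => Fin.cases rfl (fun i => ?_) i) i
  simp [famAF]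

lemma famAF_const (M : Body (m + 2)) : famAF M M (fun _ : Fin m => M) = fun _ => M := by
  funext i
  simp [famAF]

lemma famAF_update (M N : Body (m + 2)) (L : Fin m → Body (m + 2)) (j : Fin m)
    (X : Body (m + 2)) :
    famAF M N (Function.update L j X) = Function.update (famAF M N L) j.succ.succ X := by
  simp only [famAF_eq_cons, ← Fin.cons_update]

lemma forall_famAF_mem {S : Set (Body (m + 2))} {M N : Body (m + 2)} {L : Fin m → Body (m + 2)}
    (hM : M ∈ S) (hN : N ∈ S) (hL : ∀ i, L i ∈ S) (i : Fin (m + 2)) : famAF M N L i ∈ S := by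
  rw [famAF_eq_cons]
  exact Fin.cases hM (Fin.cases hN hL) i

lemma mixedVol_famAF_comm (M N : Body (m + 2)) (L : Fin m → Body (m + 2)) :
    mixedVol (famAF M N L) = mixedVol (famAF N M L) := by
  rw [← mixedVol_comp_perm _ (Equiv.swap 0 1)]
  congr 1
  funext i
  refine Fin.cases (by simp [famAF]) (fun i => Fin.cases (by simp [famAF]) (fun i => ?_) i) i
  rw [Function.comp_apply, Equiv.swap_apply_of_ne_of_ne (by simp) (by simp [Fin.ext_iff])]
  simp [famAF]

end AleksandrovFenchelFamily

/-! ### Connectedness of `K_+^∞` -/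

section MinkowskiRay

variable {V : Type*} [SeminormedAddCommGroup V] [NormedSpace ℝ V]

lemma continuous_add_nnreal_smul (K L : ConvexBody V) :
    Continuous fun t : NNReal => K + t • L := by
  obtain ⟨R, hR, hLR⟩ := L.isBounded.exists_pos_norm_le
  have hnear (s t : NNReal) : ∀ x ∈ ((K + s • L : ConvexBody V) : Set V),
      ∃ y ∈ ((K + t • L : ConvexBody V) : Set V), dist x y ≤ R * dist s t := by
    rintro _ ⟨k, hk, _, ⟨l, hl, rfl⟩, rfl⟩
    refine ⟨_, Set.add_mem_add hk (Set.smul_mem_smul_set hl), ?_⟩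
    calc dist (k + (s : ℝ) • l) (k + (t : ℝ) • l) = ‖l‖ * dist s t := by
          rw [dist_add_left, dist_eq_norm, ← sub_smul, norm_smul, mul_comm, NNReal.dist_eq,
            Real.norm_eq_abs]
      _ ≤ R * dist s t := by gcongr; exact hLR l hl
  refine (LipschitzWith.of_dist_le_mul (K := ⟨R, hR.le⟩) fun s t => ?_).continuous
  refine Metric.hausdorffDist_le_of_mem_dist (by positivity) (hnear s t) ?_
  rw [dist_comm s t]
  exact hnear t s

end MinkowskiRay

section SecondDerivative

variable {𝕜 E F : Type*} [NontriviallyNormedField 𝕜] [NormedAddCommGroup E] [NormedSpace 𝕜 E]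
  [NormedAddCommGroup F] [NormedSpace 𝕜 F] {f g : E → F} {x : E}

lemma differentiableAt_fderiv_apply (hf : ContDiffAt 𝕜 2 f x) (v : E) :
    DifferentiableAt 𝕜 (fun y => fderiv 𝕜 f y v) x :=
  ((hf.fderiv_right (m := 1) (by norm_num)).differentiableAt one_ne_zero).clm_apply
    (differentiableAt_const v)

lemma fderiv_fderiv_add_apply (hf : ContDiffAt 𝕜 2 f x) (hg : ContDiffAt 𝕜 2 g x) (v : E) :
    fderiv 𝕜 (fun y => fderiv 𝕜 (f + g) y v) x
      = fderiv 𝕜 (fun y => fderiv 𝕜 f y v) x + fderiv 𝕜 (fun y => fderiv 𝕜 g y v) x := by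
  have hfderiv : (fun y => fderiv 𝕜 (f + g) y v)
      =ᶠ[nhds x] (fun y => fderiv 𝕜 f y v) + fun y => fderiv 𝕜 g y v := by
    filter_upwards [hf.eventually (by simp), hg.eventually (by simp)] with y hfy hgy
    rw [fderiv_add (hfy.differentiableAt two_ne_zero) (hgy.differentiableAt two_ne_zero)]
    rfl
  rw [hfderiv.fderiv_eq, fderiv_add (differentiableAt_fderiv_apply hf v)
    (differentiableAt_fderiv_apply hg v)]

lemma fderiv_fderiv_const_smul_apply (c : 𝕜) (f : E → F) (x v : E) :
    fderiv 𝕜 (fun y => fderiv 𝕜 (c • f) y v) x = c • fderiv 𝕜 (fun y => fderiv 𝕜 f y v) x := by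
  have hfderiv : (fun y => fderiv 𝕜 (c • f) y v) = c • fun y => fderiv 𝕜 f y v := by
    rw [fderiv_const_smul_field]
    rfl
  rw [hfderiv, fderiv_const_smul_field, Pi.smul_apply]

end SecondDerivative

section KPlusInfty

variable {n : ℕ} {K L : Body n}

open RealInnerProductSpace in
lemma bddAbove_inner_image (K : Body n) (x : ESp n) :
    BddAbove ((fun y => ⟪x, y⟫) '' (K : Set (ESp n))) :=
  (K.isCompact.image (by fun_prop)).bddAbove

lemma suppFn_add (K L : Body n) : suppFn (K + L) = suppFn K + suppFn L := by
  funext x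
  rw [Pi.add_apply, suppFn, suppFn, suppFn,
    ← csSup_add (K.nonempty.image _) (bddAbove_inner_image K x) (L.nonempty.image _)
      (bddAbove_inner_image L x), ConvexBody.coe_add]
  exact congrArg sSup (Set.image_add (innerSL ℝ x))

lemma suppFn_smul {c : ℝ} (hc : 0 ≤ c) (K : Body n) : suppFn (c • K) = c • suppFn K := by
  funext x
  rw [Pi.smul_apply, suppFn, suppFn, ← Real.sSup_smul_of_nonneg hc, ConvexBody.coe_smul]
  exact congrArg sSup (image_smul_set (innerSL ℝ x) c (K : Set (ESp n)))

lemma contDiffAt_suppFn (hK : K ∈ KPlusInfty n) {x : ESp n} (hx : x ≠ 0) :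
    ContDiffAt ℝ 2 (suppFn K) x :=
  (hK.2.1.contDiffAt (isOpen_compl_singleton.mem_nhds hx)).of_le (WithTop.coe_le_coe.2 le_top)

lemma add_mem_kPlusInfty (hK : K ∈ KPlusInfty n) (hL : L ∈ KPlusInfty n) :
    K + L ∈ KPlusInfty n := by
  refine ⟨(hK.1.add L.nonempty).mono subset_interior_add_left, ?_, fun x hx v hxv hv => ?_⟩
  · rw [suppFn_add]
    exact hK.2.1.add hL.2.1
  · rw [suppFn_add, fderiv_fderiv_add_apply (contDiffAt_suppFn hK hx) (contDiffAt_suppFn hL hx)]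
    exact add_pos (hK.2.2 x hx v hxv hv) (hL.2.2 x hx v hxv hv)

lemma smul_mem_kPlusInfty {c : ℝ} (hc : 0 < c) (hK : K ∈ KPlusInfty n) :
    c • K ∈ KPlusInfty n := by
  refine ⟨?_, ?_, fun x hx v hxv hv => ?_⟩
  · rw [ConvexBody.coe_smul, interior_smul₀ hc.ne']
    exact hK.1.smul_set
  · rw [suppFn_smul hc.le]
    exact hK.2.1.const_smul c
  · rw [suppFn_smul hc.le, fderiv_fderiv_const_smul_apply]
    exact mul_pos hc (hK.2.2 x hx v hxv hv)

lemma range_add_nnreal_smul_subset_kPlusInfty (hK : K ∈ KPlusInfty n) (hL : L ∈ KPlusInfty n) :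
    Set.range (fun t : NNReal => K + t • L) ⊆ KPlusInfty n := by
  rintro _ ⟨t, rfl⟩
  rcases eq_or_ne t 0 with rfl | ht
  · simpa only [zero_smul NNReal L, add_zero] using hK
  · exact add_mem_kPlusInfty hK (smul_mem_kPlusInfty (NNReal.coe_pos.2 (pos_iff_ne_zero.2 ht)) hL)

-- The rays `K + tL` and `L + tK`, `t ≥ 0`, meet at `K + L`.
lemma isPreconnected_kPlusInfty : IsPreconnected (KPlusInfty n) := by
  refine isPreconnected_of_forall_pair fun K hK L hL => ?_
  have hray (K L : Body n) : IsPreconnected (Set.range fun t : NNReal => K + t • L) :=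
    isPreconnected_range (continuous_add_nnreal_smul K L)
  exact ⟨(Set.range fun t : NNReal => K + t • L) ∪ Set.range fun t : NNReal => L + t • K,
    Set.union_subset (range_add_nnreal_smul_subset_kPlusInfty hK hL)
      (range_add_nnreal_smul_subset_kPlusInfty hL hK),
    Or.inl ⟨0, by simp [zero_smul NNReal L]⟩, Or.inr ⟨0, by simp [zero_smul NNReal K]⟩,
    (hray K L).union (K + L) ⟨1, by simp⟩ ⟨1, by simp [add_comm]⟩ (hray L K)⟩

end KPlusInfty

section SignPropagation

variable {X : Type*} [TopologicalSpace X] {S : Set X}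

lemma pos_of_isPreconnected_of_ne_zero {f : X → ℝ} (hS : IsPreconnected S)
    (hf : ContinuousOn f S) (hne : ∀ x ∈ S, f x ≠ 0) {x y : X} (hx : x ∈ S) (hy : y ∈ S)
    (hfx : 0 < f x) : 0 < f y := by
  by_contra! hfy
  obtain ⟨z, hz, hfz⟩ := hS.intermediate_value hy hx hf ⟨hfy, hfx.le⟩
  exact hne z hz hfz

lemma pos_of_separately_continuousOn_of_ne_zero {ι : Type*} [Finite ι] [DecidableEq ι]
    {f : (ι → X) → ℝ} (hS : IsPreconnected S)
    (hf : ∀ x, (∀ i, x i ∈ S) → ∀ j, ContinuousOn (fun t => f (Function.update x j t)) S)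
    (hne : ∀ x, (∀ i, x i ∈ S) → f x ≠ 0) {x y : ι → X} (hx : ∀ i, x i ∈ S)
    (hy : ∀ i, y i ∈ S) (hfx : 0 < f x) : 0 < f y := by
  have := Fintype.ofFinite ι
  suffices hpiecewise : ∀ s : Finset ι, 0 < f (s.piecewise y x) by
    simpa using hpiecewise Finset.univ
  intro s
  induction s using Finset.induction_on with
  | empty => simpa using hfx
  | insert j s _ ih =>
    have hmem (i : ι) : s.piecewise y x i ∈ S := s.piecewise_cases y x (· ∈ S) (hy i) (hx i)
    rw [Finset.piecewise_insert]
    refine pos_of_isPreconnected_of_ne_zero hS (hf _ hmem j) (fun t ht => hne _ ?_) (hmem j)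
      (hy j) ?_
    · exact (Function.forall_update_iff _ fun _ z => z ∈ S).2 ⟨ht, fun i _ => hmem i⟩
    · simpa using ih

end SignPropagation

/-! ### The Hodge–Riemann form -/

section OrthogonalPart

variable {R E F : Type*} [CommRing R] [AddCommGroup E] [Module R E] [AddCommGroup F] [Module R F]
  (B : E →ₗ[R] E →ₗ[R] F) {x y : E} {e : F} {a b c : R}

lemma bilin_smul_sub_smul_left (hxy : B x y = b • e) (hyy : B y y = c • e) :
    B (c • x - b • y) y = 0 := by
  simp only [map_sub, map_smul, LinearMap.sub_apply, LinearMap.smul_apply, hxy, hyy]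
  module

lemma bilin_smul_sub_smul_self (hxx : B x x = a • e) (hxy : B x y = b • e) (hyx : B y x = b • e)
    (hyy : B y y = c • e) :
    B (c • x - b • y) (c • x - b • y) = (c * (a * c - b ^ 2)) • e := by
  simp only [map_sub, map_smul, LinearMap.sub_apply, LinearMap.smul_apply, hxx, hxy, hyx, hyy]
  module

end OrthogonalPart

namespace BFConvolution

section Form

variable {n : ℕ} (C : BFConvolution n)

/-- The form `(φ, ψ) ↦ φ * ψ * V(·[n-1], L_1) * ⋯ * V(·[n-1], L_k)`. The Hodge–Riemann
relations concern its restriction to co-degree 1 for `k = n - 2`; there the complex number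
`φ * ψ * ⋯` is encoded as a multiple of `χ`. -/
def hodgeRiemannForm {k : ℕ} (L : Fin k → Body n) : Vl n →ₗ[ℂ] Vl n →ₗ[ℂ] Vl n :=
  C.conv.compl₂ (C.conv.flip (convList C.conv (List.ofFn fun i => mixedVal (L i))))

lemma hodgeRiemannForm_apply {k : ℕ} (L : Fin k → Body n) (φ ψ : Vl n) :
    C.hodgeRiemannForm L φ ψ
      = convList C.conv (φ :: ψ :: List.ofFn fun i => mixedVal (L i)) :=
  rfl

lemma mixedVal_mem_smooth (hn : 1 ≤ n) {K : Body n} (hK : K ∈ KPlusInfty n) :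
    mixedVal K ∈ C.Smooth :=
  genMixedVal_fin_one K ▸ (C.mixed_smooth 1 hn _ fun _ => hK).1

lemma isHomog_mixedVal (C : BFConvolution n) (hn : 1 ≤ n) {K : Body n} (hK : K ∈ KPlusInfty n) :
    IsHomog (n - 1) (mixedVal K) :=
  genMixedVal_fin_one K ▸ (C.mixed_smooth 1 hn _ fun _ => hK).2

lemma exists_convList_mixedVal_eq_smul (k : ℕ) (hk : k ≤ n) :
    ∃ κ : ℝ, 0 < κ ∧ ∀ A : Fin k → Body n, (∀ i, A i ∈ KPlusInfty n) →
      convList C.conv (List.ofFn fun i => mixedVal (A i)) = (κ : ℂ) • genMixedVal A := by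
  induction k with
  | zero => exact ⟨1, one_pos, fun A _ => by simp [convList, genMixedVal_fin_zero]⟩
  | succ k ih =>
    obtain ⟨κ, hκ, htail⟩ := ih (by omega)
    obtain ⟨c, hc, hconv⟩ := C.conv_mixed 1 k (by omega)
    refine ⟨κ * c, mul_pos hκ hc, fun A hA => ?_⟩
    have hcons : genMixedVal (Fin.append (fun _ : Fin 1 => A 0) fun i : Fin k => A i.succ)
        = genMixedVal A := by
      rw [Fin.append_left_eq_cons, genMixedVal_comp_cast]
      exact congrArg genMixedVal (Fin.cons_self_tail A)
    rw [List.ofFn_succ, convList, htail _ fun i => hA i.succ, map_smul, ← genMixedVal_fin_one,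
      hconv _ _ (fun _ => hA 0) fun i => hA i.succ, hcons, smul_smul, Complex.ofReal_mul]

-- Up to a permutation, the function is the smooth valuation `V(·[1], A_i : i ≠ j)`.
lemma continuous_mixedVol_update {m : ℕ} (C : BFConvolution (m + 1))
    {A : Fin (m + 1) → Body (m + 1)} (hA : ∀ i, A i ∈ KPlusInfty (m + 1)) (j : Fin (m + 1)) :
    Continuous fun X => mixedVol (Function.update A j X) := by
  let σ : Equiv.Perm (Fin (m + 1)) := Equiv.swap 0 j
  have hval (X : Body (m + 1)) : mixedVol (Function.update A j X)
      = (genMixedVal (fun i : Fin m => A (σ i.succ)) X).re := by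
    rw [← mixedVol_comp_perm _ σ, genMixedVal, Complex.ofReal_re]
    congr 1
    funext i
    refine Fin.cases (by simp [σ]) (fun i => ?_) i
    have hne : σ i.succ ≠ j := fun h =>
      i.succ_ne_zero (σ.injective (h.trans (Equiv.swap_apply_left 0 j).symm))
    simp [Function.update_of_ne hne]
  simp_rw [hval]
  exact Complex.continuous_re.comp
    (C.smooth_val _ (C.mixed_smooth m (by omega) _ fun i => hA _).1).2.2

end Form

section HodgeRiemann

variable {m : ℕ} {C : BFConvolution (m + 2)}

lemma exists_hodgeRiemannForm_mixedVal_eq_smul (C : BFConvolution (m + 2)) :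
    ∃ κ : ℝ, 0 < κ ∧ ∀ (M N : Body (m + 2)) (L : Fin m → Body (m + 2)),
      M ∈ KPlusInfty (m + 2) → N ∈ KPlusInfty (m + 2) → (∀ i, L i ∈ KPlusInfty (m + 2)) →
      C.hodgeRiemannForm L (mixedVal M) (mixedVal N)
        = (mixedVol (famAF M N L) : ℂ) • (κ : ℂ) • chiVal := by
  obtain ⟨κ, hκ, hconv⟩ := C.exists_convList_mixedVal_eq_smul (m + 2) le_rfl
  refine ⟨κ, hκ, fun M N L hM hN hL => ?_⟩
  calc C.hodgeRiemannForm L (mixedVal M) (mixedVal N)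
      = convList C.conv (List.ofFn fun i => mixedVal (famAF M N L i)) := by
        simp [famAF_eq_cons, List.ofFn_succ, hodgeRiemannForm_apply]
    _ = (κ : ℂ) • genMixedVal (famAF M N L) := hconv _ (forall_famAF_mem hM hN hL)
    _ = (mixedVol (famAF M N L) : ℂ) • (κ : ℂ) • chiVal := by
        funext K
        simp [genMixedVal_apply_of_full, chiVal, mul_comm]

/-- The mixed Hodge–Riemann relations in co-degree 1, with `K = K_2` and `L = (K_3, …, K_n)`.
The dimension is written as `m + 2` so that `L` is indexed by `Fin m`, without truncated
subtraction. -/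
def HodgeRiemann (C : BFConvolution (m + 2)) : Prop :=
  ∀ K ∈ KPlusInfty (m + 2), ∀ L : Fin m → Body (m + 2), (∀ i, L i ∈ KPlusInfty (m + 2)) →
    ∀ φ ∈ C.Smooth, IsHomog (m + 1) φ → φ ≠ 0 → C.hodgeRiemannForm L φ (mixedVal K) = 0 →
      ∃ r : ℝ, C.hodgeRiemannForm L (conjVal φ) φ = (r : ℂ) • chiVal ∧ r < 0

namespace HodgeRiemann

variable {K K₁ K₂ M : Body (m + 2)} {L : Fin m → Body (m + 2)} {φ : Vl (m + 2)} {r : ℝ}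

lemma neg_of_primitive (hC : C.HodgeRiemann) (hK : K ∈ KPlusInfty (m + 2))
    (hL : ∀ i, L i ∈ KPlusInfty (m + 2)) (hφ : φ ∈ C.Smooth) (hhom : IsHomog (m + 1) φ)
    (hreal : conjVal φ = φ) (hne : φ ≠ 0) (hprim : C.hodgeRiemannForm L φ (mixedVal K) = 0)
    (hr : C.hodgeRiemannForm L φ φ = (r : ℂ) • chiVal) : r < 0 := by
  obtain ⟨s, hs, hneg⟩ := hC K hK L hL φ hφ hhom hne hprim
  rw [hreal, hr, ofReal_smul_chiVal_inj] at hs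
  exact hs ▸ hneg

lemma nonpos_of_primitive (hC : C.HodgeRiemann) (hK : K ∈ KPlusInfty (m + 2))
    (hL : ∀ i, L i ∈ KPlusInfty (m + 2)) (hφ : φ ∈ C.Smooth) (hhom : IsHomog (m + 1) φ)
    (hreal : conjVal φ = φ) (hprim : C.hodgeRiemannForm L φ (mixedVal K) = 0)
    (hr : C.hodgeRiemannForm L φ φ = (r : ℂ) • chiVal) : r ≤ 0 := by
  rcases eq_or_ne φ 0 with rfl | hne
  · refine (ofReal_smul_chiVal_inj.1 (hr.symm.trans ?_)).le
    simp
  · exact (hC.neg_of_primitive hK hL hφ hhom hreal hne hprim hr).le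

lemma mixedVol_famAF_self_ne_zero (hC : C.HodgeRiemann) (hM : M ∈ KPlusInfty (m + 2))
    (hL : ∀ i, L i ∈ KPlusInfty (m + 2)) : mixedVol (famAF M M L) ≠ 0 := by
  intro hzero
  obtain ⟨κ, -, hform⟩ := C.exists_hodgeRiemannForm_mixedVal_eq_smul
  have hself : C.hodgeRiemannForm L (mixedVal M) (mixedVal M) = 0 := by
    rw [hform M M L hM hM hL, hzero, Complex.ofReal_zero, zero_smul]
  refine lt_irrefl (0 : ℝ) (hC.neg_of_primitive hM hL (C.mixedVal_mem_smooth (by omega) hM)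
    (C.isHomog_mixedVal (by omega) hM) (conjVal_mixedVal M) (mixedVal_ne_zero hM.1) hself ?_)
  rw [hself, Complex.ofReal_zero, zero_smul]

lemma mixedVol_famAF_self_pos (hC : C.HodgeRiemann) (hM : M ∈ KPlusInfty (m + 2))
    (hL : ∀ i, L i ∈ KPlusInfty (m + 2)) : 0 < mixedVol (famAF M M L) := by
  refine pos_of_separately_continuousOn_of_ne_zero (f := fun L : Fin m → Body (m + 2) =>
    mixedVol (famAF M M L)) isPreconnected_kPlusInfty (fun L' hL' j => ?_)
    (fun L' hL' => hC.mixedVol_famAF_self_ne_zero hM hL') (x := fun _ => M) (fun _ => hM) hL ?_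
  · have hcont := C.continuous_mixedVol_update (forall_famAF_mem hM hM hL') j.succ.succ
    exact hcont.continuousOn.congr fun X _ => congrArg mixedVol (famAF_update M M L' j X)
  · simp only [famAF_const, mixedVol_const]
    exact toReal_volume_pos hM.1

theorem aleksandrov_fenchel (hC : C.HodgeRiemann) (hK₁ : K₁ ∈ KPlusInfty (m + 2))
    (hK₂ : K₂ ∈ KPlusInfty (m + 2)) (hL : ∀ i, L i ∈ KPlusInfty (m + 2)) :
    mixedVol (famAF K₁ K₁ L) * mixedVol (famAF K₂ K₂ L) ≤ mixedVol (famAF K₁ K₂ L) ^ 2 := by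
  obtain ⟨κ, hκ, hform⟩ := C.exists_hodgeRiemannForm_mixedVal_eq_smul
  have hxx := hform K₁ K₁ L hK₁ hK₁ hL
  have hxy := hform K₁ K₂ L hK₁ hK₂ hL
  have hyx := hform K₂ K₁ L hK₂ hK₁ hL
  have hyy := hform K₂ K₂ L hK₂ hK₂ hL
  rw [mixedVol_famAF_comm] at hyx
  have hc : 0 < mixedVol (famAF K₂ K₂ L) := hC.mixedVol_famAF_self_pos hK₂ hL
  set a := mixedVol (famAF K₁ K₁ L)
  set b := mixedVol (famAF K₁ K₂ L)
  set c := mixedVol (famAF K₂ K₂ L)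
  let φ : Vl (m + 2) := (c : ℂ) • mixedVal K₁ - (b : ℂ) • mixedVal K₂
  have hφ : φ ∈ C.Smooth := C.Smooth.sub_mem
    (C.Smooth.smul_mem _ (C.mixedVal_mem_smooth (by omega) hK₁))
    (C.Smooth.smul_mem _ (C.mixedVal_mem_smooth (by omega) hK₂))
  have hhom : φ ∈ homogSub (m + 2) (m + 1) := (homogSub _ _).sub_mem
    ((homogSub _ _).smul_mem _ (C.isHomog_mixedVal (by omega) hK₁))
    ((homogSub _ _).smul_mem _ (C.isHomog_mixedVal (by omega) hK₂))
  have hreal : conjVal φ = φ := by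
    funext X
    simp [φ, conjVal, mixedVal]
  have hprim : C.hodgeRiemannForm L φ (mixedVal K₂) = 0 := bilin_smul_sub_smul_left _ hxy hyy
  have hself : C.hodgeRiemannForm L φ φ = ((c * (a * c - b ^ 2) * κ : ℝ) : ℂ) • chiVal := by
    rw [bilin_smul_sub_smul_self _ hxx hxy hyx hyy, smul_smul]
    push_cast
    rfl
  have hnonpos := hC.nonpos_of_primitive hK₂ hL hφ hhom hreal hprim hself
  have hdiff : a * c - b ^ 2 ≤ 0 :=
    nonpos_of_mul_nonpos_right (nonpos_of_mul_nonpos_left hnonpos hκ) hc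
  exact sub_nonpos.1 hdiff

end HodgeRiemann

end HodgeRiemann

end BFConvolution

/-- **The mixed Hodge–Riemann relations in co-degree 1 imply the Aleksandrov–Fenchel
inequality** (Corollary 8.1). Suppose that for all `K_2, …, K_n ∈ K_+^∞` and every non-zero
`φ ∈ Val_{n-1}^∞` with `φ * V(·[n-1],K_2) * ⋯ * V(·[n-1],K_n) = 0` one has
`-conj(φ) * φ * V(·[n-1],K_3) * ⋯ * V(·[n-1],K_n) > 0` (read in `Val_0^∞ ≅ ℂ` via `χ`).
Then `V(K_1,K_2,K_3,…,K_n)² ≥ V(K_1,K_1,K_3,…,K_n) V(K_2,K_2,K_3,…,K_n)` for all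
`K_1, …, K_n ∈ K_+^∞`. -/
theorem mixed_hodge_riemann_implies_aleksandrov_fenchel (n : ℕ) (hn : 2 ≤ n)
    (C : BFConvolution n)
    (hyp : ∀ L : Fin (n - 1) → Body n, (∀ i, L i ∈ KPlusInfty n) →
      ∀ φ : Vl n, φ ∈ C.Smooth → IsHomog (n - 1) φ → φ ≠ 0 →
      convList C.conv (φ :: List.ofFn fun i : Fin (n - 1) =>
        genMixedVal fun _ : Fin 1 => L i) = 0 →
      ∃ r : ℝ, convList C.conv (conjVal φ :: φ :: List.ofFn fun i : Fin (n - 2) =>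
          genMixedVal fun _ : Fin 1 => L (Fin.cast (by omega) i.succ)) = (r : ℂ) • chiVal
        ∧ r < 0) :
    ∀ K₁ K₂ : Body n, K₁ ∈ KPlusInfty n → K₂ ∈ KPlusInfty n →
    ∀ L : Fin (n - 2) → Body n, (∀ i, L i ∈ KPlusInfty n) →
      mixedVol (famAF K₁ K₁ L) * mixedVol (famAF K₂ K₂ L) ≤ mixedVol (famAF K₁ K₂ L) ^ 2 := by
  obtain ⟨m, rfl⟩ : ∃ m, n = m + 2 := ⟨n - 2, by omega⟩
  have hC : C.HodgeRiemann := by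
    intro K hK L hL φ hφ hhom hne hprim
    let KL : Fin (m + 1) → Body (m + 2) := Fin.cons K L
    have hlist : (List.ofFn fun i => mixedVal (KL i))
        = mixedVal K :: List.ofFn fun i => mixedVal (L i) := by
      simp [KL, List.ofFn_succ]
    rw [C.hodgeRiemannForm_apply, ← hlist] at hprim
    simp only [genMixedVal_fin_one] at hyp
    exact hyp KL (Fin.cases hK hL) φ hφ hhom hne hprim
  exact fun K₁ K₂ hK₁ hK₂ L hL => hC.aleksandrov_fenchel hK₁ hK₂ hL
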